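/- Fix q ∈ (0,1) and let (M_n) be a sequence of integers with 0 ≤ M_n ≤ n−1 such that lim_{n→∞} (n − M_n) = ∞. Then lim_{n→∞} 𝒫_n^q(S(n,M_n)) = 0. -/

import Mathlib

open Finset Filter

/-- The number of inversions of a permutation of `Fin n`. -/
def invCount (n : ℕ) (σ : Equiv.Perm (Fin n)) : ℕ :=
  (Finset.univ.filter (fun p : Fin n × Fin n => p.1 < p.2 ∧ σ p.2 < σ p.1)).card

/-- Normalization constant of the Mallows distribution:
`Z_n(q) = ∑_{σ ∈ S_n} q^{inv σ}`. -/
noncomputable def mallowsZ (n : ℕ) (q : ℝ) : ℝ :=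
  ∑ σ : Equiv.Perm (Fin n), q ^ invCount n σ

/-- The Mallows probability of a set `A` of permutations:
`P_n^q(A) = (∑_{σ ∈ A} q^{inv σ}) / Z_n(q)`. -/
noncomputable def mallowsProb (n : ℕ) (q : ℝ) (A : Finset (Equiv.Perm (Fin n))) : ℝ :=
  (∑ σ ∈ A, q ^ invCount n σ) / mallowsZ n q

/-- The success event for the strategy `S(n,M)`.  Positions are indexed by `Fin n`
(the index `i : Fin n` represents the `(i+1)`-st arriving item) and ranks are the
values of `σ` (the value `n-1`, i.e. the top of `Fin n`, represents the highest
rank `n`).  For `M ≥ 1` the strategy succeeds iff for some position `j` with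
`(j:ℕ) ≥ M` (i.e. item number `j+1 ≥ M+1`) the item at position `j` has the top
rank and the maximum rank among the items strictly before position `j` equals the
maximum rank among the first `M` items.  For `M = 0` it succeeds iff the first
item has top rank. -/
def winEvent (n M : ℕ) : Finset (Equiv.Perm (Fin n)) :=
  if M = 0 then
    Finset.univ.filter (fun σ => ∀ i : Fin n, (i : ℕ) = 0 → (σ i : ℕ) = n - 1)
  else
    Finset.univ.filter (fun σ => ∃ j : Fin n, M ≤ (j : ℕ) ∧ (σ j : ℕ) = n - 1 ∧
      (Finset.univ.filter (fun i : Fin n => i < j)).sup (fun i => (σ i : ℕ)) =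
      (Finset.univ.filter (fun i : Fin n => (i : ℕ) < M)).sup (fun i => (σ i : ℕ)))

/-- `𝒫_n^q(S(n,M))`, the success probability of the strategy `S(n,M)` under the
Mallows distribution with parameter `q`. -/
noncomputable def succProb (n M : ℕ) (q : ℝ) : ℝ := mallowsProb n q (winEvent n M)

/-!
Entry `i` of the Lehmer code of `σ` counts the larger entries of `σ` to the left of `i`, so the
code sums to the number of inversions and vanishes exactly at the left-to-right maxima. Since the
Lehmer code is a bijection onto `∏ i, {0, …, i}`, its entries are independent under the Mallows
distribution, and each entry is positive with probability at most `q`. If `S(n, M)` succeeds, then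
at most one of the `n - M` positions after the first `M` holds a left-to-right maximum, whence a
union bound gives `𝒫_n^q(S(n, M)) ≤ (n - M) q ^ (n - M - 1)`.
-/

lemma sum_biUnion_le_sum_sum {κ α M : Type*} [DecidableEq α] [AddCommMonoid M] [Preorder M]
    [AddLeftMono M] {s : Finset κ} {t : κ → Finset α} {f : α → M}
    (hf : ∀ a ∈ s.biUnion t, 0 ≤ f a) :
    ∑ a ∈ s.biUnion t, f a ≤ ∑ j ∈ s, ∑ a ∈ t j, f a := by
  have himage : s.biUnion t = (s.sigma t).image Sigma.snd := by
    ext a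
    simp
  rw [himage] at hf ⊢
  exact (sum_image_le_of_nonneg hf).trans_eq (sum_sigma _ _ _)

lemma sum_range_succ_ite_pos_pow_le {R : Type*} [Semiring R] [PartialOrder R] [IsOrderedRing R]
    {q : R} (hq : 0 ≤ q) (m : ℕ) :
    ∑ c ∈ range (m + 1), (if 0 < c then q ^ c else 0) ≤ q * ∑ c ∈ range (m + 1), q ^ c := by
  calc ∑ c ∈ range (m + 1), (if 0 < c then q ^ c else 0)
      = q * ∑ c ∈ range m, q ^ c := by
        simp [sum_range_succ', mul_sum, pow_succ']
    _ ≤ q * ∑ c ∈ range (m + 1), q ^ c := by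
        gcongr
        exact m.le_succ

lemma tendsto_self_mul_const_pow_sub_one {q : ℝ} (hq : |q| < 1) :
    Tendsto (fun k : ℕ ↦ k * q ^ (k - 1)) atTop (nhds 0) := by
  rw [← tendsto_add_atTop_iff_nat 1]
  simpa [add_mul] using (tendsto_self_mul_const_pow_of_abs_lt_one hq).add
    (tendsto_pow_atTop_nhds_zero_of_abs_lt_one hq)

section LehmerCode

variable {ι α : Type*} [LinearOrder ι] [LocallyFiniteOrderBot ι] [LinearOrder α]

/-- The Lehmer code of a sequence `f`, in the convention that counts, for each position `i`, the
earlier entries that are larger than `f i`. -/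
def lehmerCode (f : ι → α) (i : ι) : ℕ := #{k ∈ Iio i | f i < f k}

lemma lehmerCode_pos_iff {f : ι → α} {i : ι} : 0 < lehmerCode f i ↔ ∃ k < i, f i < f k := by
  simp [lehmerCode, card_pos, Finset.Nonempty]

lemma strictAntiOn_card_filter_lt (s : Finset α) : StrictAntiOn (fun a ↦ #{b ∈ s | a < b}) s := by
  intro a _ b hb hab
  refine card_lt_card ⟨monotone_filter_right s fun _ _ ↦ hab.trans, fun hsub ↦ ?_⟩
  exact lt_irrefl b (mem_filter.1 (hsub (mem_filter.2 ⟨hb, hab⟩))).2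

lemma lehmerCode_eq_card_filter_map (σ : ι ≃ α) (i : ι) :
    lehmerCode σ i = #{b ∈ (Iic i).map σ.toEmbedding | σ i < b} := by
  rw [filter_map, card_map, lehmerCode]
  congr 1
  ext k
  simp only [mem_filter, mem_Iio, mem_Iic, Function.comp_apply, Equiv.coe_toEmbedding]
  exact ⟨fun h ↦ ⟨h.1.le, h.2⟩, fun h ↦ ⟨h.1.lt_of_ne (by rintro rfl; exact h.2.false), h.2⟩⟩

lemma map_Iic_subset_of_eqOn_Ioi {β : Type*} {σ τ : ι ≃ β} {i : ι} (h : Set.EqOn σ τ (Set.Ioi i)) :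
    (Iic i).map σ.toEmbedding ⊆ (Iic i).map τ.toEmbedding := by
  intro a
  simp only [mem_map_equiv, mem_Iic]
  contrapose!
  intro ha
  rwa [← τ.apply_symm_apply a, ← h ha, σ.symm_apply_apply]

lemma lehmerCode_injective [WellFoundedGT ι] :
    Function.Injective fun σ : ι ≃ α ↦ lehmerCode σ := by
  -- Entries are recovered from right to left: once those after `i` are known, so is the set of
  -- those up to `i`, in which `σ i` is located by the number of larger elements.
  intro σ τ hστ
  ext i
  induction i using WellFoundedGT.induction with
  | ind i ih =>
    have hmap : (Iic i).map σ.toEmbedding = (Iic i).map τ.toEmbedding :=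
      (map_Iic_subset_of_eqOn_Ioi ih).antisymm
        (map_Iic_subset_of_eqOn_Ioi fun k hk ↦ (ih k hk).symm)
    have hcard := congrFun hστ i
    simp only [lehmerCode_eq_card_filter_map, hmap] at hcard
    refine (strictAntiOn_card_filter_lt _).injOn ?_ ?_ hcard
    · simp [← hmap]
    · simp

end LehmerCode

section Mallows

variable {n : ℕ} {q : ℝ}

lemma lehmerCode_le {α : Type*} [LinearOrder α] (f : Fin n → α) (i : Fin n) : lehmerCode f i ≤ i :=
  (card_filter_le _ _).trans_eq (Fin.card_Iio i)

lemma image_lehmerCode :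
    univ.image (fun σ : Equiv.Perm (Fin n) ↦ lehmerCode σ) =
      Fintype.piFinset fun i : Fin n ↦ range (i + 1) := by
  refine eq_of_subset_of_card_le ?_ ?_
  · simpa [image_subset_iff, Nat.lt_succ_iff] using fun σ : Equiv.Perm (Fin n) ↦ lehmerCode_le σ
  · rw [card_image_of_injective _ lehmerCode_injective, card_univ, Fintype.card_perm,
      Fintype.card_fin, Fintype.card_piFinset]
    simp only [card_range]
    rw [Fin.prod_univ_eq_prod_range (· + 1) n, prod_range_add_one_eq_factorial]

lemma sum_prod_lehmerCode {R : Type*} [CommSemiring R] (g : Fin n → ℕ → R) :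
    ∑ σ : Equiv.Perm (Fin n), ∏ i, g i (lehmerCode σ i) =
      ∏ i : Fin n, ∑ c ∈ range (i + 1), g i c := by
  rw [prod_univ_sum, ← image_lehmerCode, sum_image lehmerCode_injective.injOn]

lemma invCount_eq_sum_lehmerCode (σ : Equiv.Perm (Fin n)) :
    invCount n σ = ∑ i, lehmerCode σ i := by
  simp only [invCount, lehmerCode, ← filter_gt_eq_Iio, filter_filter, card_filter]
  rw [Fintype.sum_prod_type, sum_comm]

lemma pow_invCount_eq_prod (q : ℝ) (σ : Equiv.Perm (Fin n)) :
    q ^ invCount n σ = ∏ i, q ^ lehmerCode σ i := by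
  rw [invCount_eq_sum_lehmerCode, prod_pow_eq_pow_sum]

lemma mallowsZ_eq_prod_geom_sum (n : ℕ) (q : ℝ) :
    mallowsZ n q = ∏ i : Fin n, ∑ c ∈ range (i + 1), q ^ c := by
  simp only [mallowsZ, pow_invCount_eq_prod, sum_prod_lehmerCode fun _ c ↦ q ^ c]

lemma mallowsZ_pos (hq : 0 ≤ q) : 0 < mallowsZ n q := by
  rw [mallowsZ_eq_prod_geom_sum]
  exact prod_pos fun i _ ↦ geom_sum_pos hq i.val.succ_ne_zero

lemma mallowsProb_nonneg (hq : 0 ≤ q) (A : Finset (Equiv.Perm (Fin n))) :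
    0 ≤ mallowsProb n q A :=
  div_nonneg (sum_nonneg fun _ _ ↦ pow_nonneg hq _) (mallowsZ_pos hq).le

lemma mallowsProb_mono (hq : 0 ≤ q) {A B : Finset (Equiv.Perm (Fin n))} (hAB : A ⊆ B) :
    mallowsProb n q A ≤ mallowsProb n q B :=
  div_le_div_of_nonneg_right
    (sum_le_sum_of_subset_of_nonneg hAB fun _ _ _ ↦ pow_nonneg hq _) (mallowsZ_pos hq).le

lemma mallowsProb_biUnion_le {κ : Type*} (hq : 0 ≤ q) (s : Finset κ)
    (A : κ → Finset (Equiv.Perm (Fin n))) :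
    mallowsProb n q (s.biUnion A) ≤ ∑ j ∈ s, mallowsProb n q (A j) := by
  simp only [mallowsProb, ← sum_div]
  exact div_le_div_of_nonneg_right (sum_biUnion_le_sum_sum fun _ _ ↦ pow_nonneg hq _)
    (mallowsZ_pos hq).le

lemma mallowsProb_forall_lehmerCode_pos_le (hq : 0 ≤ q) (S : Finset (Fin n)) :
    mallowsProb n q {σ | ∀ i ∈ S, 0 < lehmerCode σ i} ≤ q ^ #S := by
  let weight (i : Fin n) (c : ℕ) : ℝ := if i ∈ S → 0 < c then q ^ c else 0
  have weight_nonneg (i c) : 0 ≤ weight i c := by positivity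
  have sum_weight_le (i : Fin n) : ∑ c ∈ range (i + 1), weight i c ≤
      (if i ∈ S then q else 1) * ∑ c ∈ range (i + 1), q ^ c := by
    by_cases hi : i ∈ S
    · simpa [weight, hi] using sum_range_succ_ite_pos_pow_le hq i
    · simp [weight, hi]
  rw [mallowsProb, div_le_iff₀ (mallowsZ_pos hq)]
  calc ∑ σ ∈ ({σ | ∀ i ∈ S, 0 < lehmerCode σ i} : Finset (Equiv.Perm (Fin n))), q ^ invCount n σ
      = ∑ σ : Equiv.Perm (Fin n), ∏ i, weight i (lehmerCode σ i) := by
        simp only [sum_filter, pow_invCount_eq_prod, weight, prod_ite_zero, mem_univ, true_imp_iff]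
    _ = ∏ i : Fin n, ∑ c ∈ range (i + 1), weight i c := sum_prod_lehmerCode weight
    _ ≤ ∏ i : Fin n, (if i ∈ S then q else 1) * ∑ c ∈ range (i + 1), q ^ c :=
        prod_le_prod (fun i _ ↦ sum_nonneg fun c _ ↦ weight_nonneg i c) fun i _ ↦ sum_weight_le i
    _ = q ^ #S * mallowsZ n q := by
        rw [prod_mul_distrib, Fintype.prod_ite_mem, prod_const, mallowsZ_eq_prod_geom_sum]

end Mallows

section Strategy

variable {n : ℕ}

lemma exists_top_of_mem_winEvent {m : Fin n} {σ : Equiv.Perm (Fin n)} (hσ : σ ∈ winEvent n m) :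
    ∃ j ≥ m, (∀ k, σ k ≤ σ j) ∧ ∀ i ∈ Ico m j, 0 < lehmerCode σ i := by
  have le_of_top {j} (hj : (σ j : ℕ) = n - 1) (k : Fin n) : σ k ≤ σ j := by
    rw [Fin.le_def]; omega
  rw [winEvent] at hσ
  split_ifs at hσ with hm
  · simp only [mem_filter, mem_univ, true_and] at hσ
    exact ⟨m, le_rfl, le_of_top (hσ m hm), by simp⟩
  · simp only [mem_filter, mem_univ, true_and] at hσ
    obtain ⟨j, hmj, hj, hsup⟩ := hσ
    refine ⟨j, hmj, le_of_top hj, fun i hi ↦ ?_⟩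
    obtain ⟨hmi, hij⟩ := mem_Ico.1 hi
    obtain ⟨k, hk, hmax⟩ := exists_mem_eq_sup (univ.filter fun i : Fin n ↦ (i : ℕ) < m)
      ⟨⟨0, by omega⟩, mem_filter.2 ⟨mem_univ _, Nat.pos_of_ne_zero hm⟩⟩ fun i ↦ (σ i : ℕ)
    have hki : k < i := (Fin.lt_def.2 (mem_filter.1 hk).2).trans_le hmi
    have hle : (σ i : ℕ) ≤ σ k := by
      rw [← hmax, ← hsup]
      exact le_sup (f := fun i ↦ (σ i : ℕ)) (by simpa using hij)
    exact lehmerCode_pos_iff.2 ⟨k, hki, lt_of_le_of_ne hle (σ.injective.ne hki.ne')⟩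

lemma winEvent_subset_biUnion (m : Fin n) :
    winEvent n m ⊆
      (Ici m).biUnion fun j ↦ {σ | ∀ i ∈ (Ici m).erase j, 0 < lehmerCode σ i} := by
  intro σ hσ
  obtain ⟨j, hmj, htop, hpos⟩ := exists_top_of_mem_winEvent hσ
  simp only [mem_biUnion, mem_Ici, mem_filter, mem_univ, true_and, mem_erase]
  refine ⟨j, hmj, fun i ⟨hij, hmi⟩ ↦ ?_⟩
  obtain hlt | hgt := lt_or_gt_of_ne hij
  · exact hpos i (mem_Ico.2 ⟨hmi, hlt⟩)
  · exact lehmerCode_pos_iff.2 ⟨j, hgt, (htop i).lt_of_ne (σ.injective.ne hij)⟩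

lemma succProb_le (m : Fin n) {q : ℝ} (hq : 0 ≤ q) :
    succProb n m q ≤ (n - m : ℕ) * q ^ (n - m - 1 : ℕ) := by
  calc succProb n m q
      ≤ ∑ j ∈ Ici m, mallowsProb n q {σ | ∀ i ∈ (Ici m).erase j, 0 < lehmerCode σ i} :=
        (mallowsProb_mono hq (winEvent_subset_biUnion m)).trans (mallowsProb_biUnion_le hq _ _)
    _ ≤ ∑ j ∈ Ici m, q ^ #((Ici m).erase j) :=
        sum_le_sum fun j _ ↦ mallowsProb_forall_lehmerCode_pos_le hq _
    _ = ∑ _ ∈ Ici m, q ^ (n - m - 1 : ℕ) :=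
        sum_congr rfl fun j hj ↦ by rw [card_erase_of_mem hj, Fin.card_Ici]
    _ = (n - m : ℕ) * q ^ (n - m - 1 : ℕ) := by
        rw [sum_const, Fin.card_Ici, nsmul_eq_mul]

end Strategy

theorem stmt_9 (q : ℝ) (hq : q ∈ Set.Ioo (0 : ℝ) 1)
    (M : ℕ → ℕ) (hM : ∀ n, 1 ≤ n → M n ≤ n - 1)
    (hlim : Tendsto (fun n : ℕ => n - M n) atTop atTop) :
    Tendsto (fun n : ℕ => succProb n (M n) q) atTop (nhds 0) := by
  have hq' : |q| < 1 := abs_lt.2 ⟨by linarith [hq.1], hq.2⟩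
  refine squeeze_zero' (Eventually.of_forall fun n ↦ mallowsProb_nonneg hq.1.le _) ?_
    ((tendsto_self_mul_const_pow_sub_one hq').comp hlim)
  filter_upwards [eventually_ge_atTop 1] with n hn
  exact succProb_le ⟨M n, (hM n hn).trans_lt (Nat.sub_one_lt_of_lt hn)⟩ hq.1.le
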